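/- Let Cens be a truthful, effective and minimally invasive censor, let (KB, AK, Sec) be a privacy configuration, and let q be a query sequence with q_i = q_j for some indices i, j. Then Cens_PK(q)_i = Cens_PK(q)_j. -/

import Mathlib

/-- A logic: a set (type) of formulas with a consequence relation satisfying
reflexivity, weakening and transitivity (cut). -/
structure Logic where
  Fml : Type
  Proves : Set Fml → Fml → Prop
  refl : ∀ A : Fml, Proves {A} A
  weaken : ∀ (Γ Δ : Set Fml) (A : Fml), Proves Γ A → Proves (Γ ∪ Δ) A
  cut : ∀ (Γ Δ : Set Fml) (C A : Fml),
    Proves Γ C → Proves (Δ ∪ {C}) A → Proves (Γ ∪ Δ) A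

/-- Modal formulas over a logic `L`: boxed `L`-formulas, falsum, implication. -/
inductive MFml (L : Logic) : Type where
  | box : L.Fml → MFml L
  | bot : MFml L
  | imp : MFml L → MFml L → MFml L

/-- ¬A := A → ⊥ -/
def MFml.neg {L : Logic} (A : MFml L) : MFml L := MFml.imp A MFml.bot

/-- ⊤ := ⊥ → ⊥ -/
def MFml.top {L : Logic} : MFml L := MFml.imp MFml.bot MFml.bot

/-- A ∨ B := ¬A → B -/
def MFml.or {L : Logic} (A B : MFml L) : MFml L := MFml.imp (MFml.neg A) B

/-- An M-model is a set of sets of `L`-formulas. -/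
abbrev MModel (L : Logic) := Set (Set L.Fml)

/-- Truth of a modal formula in an M-model. -/
def Sat {L : Logic} (M : MModel L) : MFml L → Prop
  | MFml.box A => ∀ w ∈ M, L.Proves w A
  | MFml.bot => False
  | MFml.imp A B => Sat M A → Sat M B

/-- `M ⊩ Γ`. -/
def SatSet {L : Logic} (M : MModel L) (Γ : Set (MFml L)) : Prop :=
  ∀ A ∈ Γ, Sat M A

/-- Γ is satisfiable. -/
def Satisfiable {L : Logic} (Γ : Set (MFml L)) : Prop :=
  ∃ M : MModel L, SatSet M Γ

/-- Γ ⊨ A. -/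
def Entails {L : Logic} (Γ : Set (MFml L)) (A : MFml L) : Prop :=
  ∀ M : MModel L, SatSet M Γ → Sat M A

/-- A privacy configuration (KB, AK, Sec). -/
structure PrivacyConfig (L : Logic) where
  KB : Set L.Fml
  AK : Set (MFml L)
  Sec : Set L.Fml
  consistent : ∃ A : L.Fml, ¬ L.Proves KB A
  truthfulStart : ∀ A ∈ AK, Sat ({KB} : MModel L) A
  hiddenSecrets : ∀ s ∈ Sec, ¬ Entails AK (MFml.box s)

/-- The answers 𝔸 = {t, u, r}. -/
inductive Ans : Type
  | t | u | r
deriving DecidableEq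

open Classical in
/-- eval(KB, q) := t if KB ⊢ q and u otherwise. -/
noncomputable def evalKB (L : Logic) (KB : Set L.Fml) (q : L.Fml) : Ans :=
  if L.Proves KB q then Ans.t else Ans.u

/-- A censor assigns an answering function (on infinite query sequences,
indexed by ℕ) to each privacy configuration. -/
abbrev Censor (L : Logic) := PrivacyConfig L → (ℕ → L.Fml) → (ℕ → Ans)

/-- A censor is continuous iff answers on an initial segment only depend on
the queries in that initial segment. -/
def ContinuousCensor {L : Logic} (Cens : Censor L) : Prop :=
  ∀ (PK : PrivacyConfig L) (q q' : ℕ → L.Fml) (n : ℕ),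
    (∀ i < n, q i = q' i) → ∀ i < n, Cens PK q i = Cens PK q' i

/-- A censor is truthful iff each answer is either the correct evaluation or refusal. -/
def Truthful {L : Logic} (Cens : Censor L) : Prop :=
  ∀ (PK : PrivacyConfig L) (q : ℕ → L.Fml) (i : ℕ),
    Cens PK q i = evalKB L PK.KB (q i) ∨ Cens PK q i = Ans.r

/-- Content of an answer to a query. -/
def contAns {L : Logic} (q : L.Fml) : Ans → MFml L
  | Ans.t => MFml.box q
  | Ans.u => MFml.neg (MFml.box q)
  | Ans.r => MFml.top

/-- The content of the answers of a censor to a query sequence up to `n`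
(0-based: queries with index `< n`), including the a priori knowledge. -/
def cont {L : Logic} (Cens : Censor L) (PK : PrivacyConfig L)
    (q : ℕ → L.Fml) (n : ℕ) : Set (MFml L) :=
  {F | ∃ i < n, F = contAns (q i) (Cens PK q i)} ∪ PK.AK

/-- The full content of a knowledge base. -/
noncomputable def fullContent (L : Logic) (KB : Set L.Fml) : Set (MFml L) :=
  {F | ∃ A : L.Fml, F = contAns A (evalKB L KB A)}

/-- A censor is credible iff the content of its answers is always satisfiable. -/
def Credible {L : Logic} (Cens : Censor L) : Prop :=
  ∀ (PK : PrivacyConfig L) (q : ℕ → L.Fml) (n : ℕ), Satisfiable (cont Cens PK q n)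

/-- A censor is effective iff the content of its answers never entails a boxed secret. -/
def Effective {L : Logic} (Cens : Censor L) : Prop :=
  ∀ (PK : PrivacyConfig L) (q : ℕ → L.Fml) (n : ℕ),
    ∀ s ∈ PK.Sec, ¬ Entails (cont Cens PK q n) (MFml.box s)

/-- A censor is minimally invasive iff whenever it distorts an answer,
replacing that answer by the correct evaluation (keeping the earlier answers)
would violate effectiveness or credibility. -/
def MinimallyInvasive {L : Logic} (Cens : Censor L) : Prop :=
  ∀ (PK : PrivacyConfig L) (q : ℕ → L.Fml) (i : ℕ),
    Cens PK q i ≠ evalKB L PK.KB (q i) →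
    ∀ Cens' : Censor L,
      (∀ j < i, Cens' PK q j = Cens PK q j) →
      Cens' PK q i = evalKB L PK.KB (q i) →
      ∃ n : ℕ,
        (∃ s ∈ PK.Sec, Entails (cont Cens' PK q n) (MFml.box s)) ∨
        ¬ Satisfiable (cont Cens' PK q n)

/-- A censor is repudiating iff for every privacy configuration and query
sequence there are alternative knowledge bases, not entailing any secret,
producing the same answers on each initial segment. -/
def Repudiating {L : Logic} (Cens : Censor L) : Prop :=
  ∀ (PK : PrivacyConfig L) (q : ℕ → L.Fml),
    ∃ PKs : ℕ → PrivacyConfig L,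
      (∀ i, (PKs i).AK = PK.AK ∧ (PKs i).Sec = PK.Sec) ∧
      (∀ n, ∀ i < n, Cens PK q i = Cens (PKs n) q i) ∧
      (∀ i, ∀ s ∈ PK.Sec, ¬ L.Proves (PKs i).KB s)

/-- A censor is non-refusing iff it never answers `r`. -/
def NonRefusing {L : Logic} (Cens : Censor L) : Prop :=
  ∀ (PK : PrivacyConfig L) (q : ℕ → L.Fml) (i : ℕ), Cens PK q i ≠ Ans.r

/-!
Suppose a query is answered honestly at one position and refused at another. Replacing the refusal
by the honest answer adds nothing to the content once both positions have been reached, so the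
corrected censor still reveals no secret; it is truthful, hence credible, because the model `{KB}`
satisfies every honest answer. Minimal invasiveness therefore forbids the refusal. The order of the
two positions does not matter: effectiveness of the original censor is applied at a stage that
includes both.
-/

section Satisfaction

variable {L : Logic}

theorem Entails.mono {Γ Δ : Set (MFml L)} {A : MFml L} (hΓ : Entails Γ A) (hΓΔ : Γ ⊆ Δ) :
    Entails Δ A :=
  fun M hM => hΓ M fun B hB => hM B (hΓΔ hB)

theorem sat_singleton_box {w : Set L.Fml} {A : L.Fml} : Sat {w} (MFml.box A) ↔ L.Proves w A := by
  simp only [Sat, Set.mem_singleton_iff, forall_eq]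

theorem sat_contAns_evalKB (KB : Set L.Fml) (A : L.Fml) :
    Sat {KB} (contAns A (evalKB L KB A)) := by
  unfold evalKB
  split_ifs with hA
  · exact sat_singleton_box.mpr hA
  · exact fun hbox => hA (sat_singleton_box.mp hbox)

end Satisfaction

section Censors

variable {L : Logic} {Cens : Censor L}

theorem Truthful.satSet_cont (htruth : Truthful Cens) (PK : PrivacyConfig L) (q : ℕ → L.Fml)
    (n : ℕ) : SatSet {PK.KB} (cont Cens PK q n) := by
  rintro F (⟨i, -, rfl⟩ | hF)
  · rcases htruth PK q i with heval | hrefuse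
    · rw [heval]
      exact sat_contAns_evalKB PK.KB (q i)
    · rw [hrefuse]
      exact id
  · exact PK.truthfulStart F hF

theorem Truthful.credible (htruth : Truthful Cens) : Credible Cens :=
  fun PK q n => ⟨{PK.KB}, htruth.satSet_cont PK q n⟩

/-- The censor that gives the honest answer at position `m` and otherwise answers like `Cens`,
even after position `m`. It is the competitor against which minimal invasiveness is tested. -/
noncomputable def Censor.correctAt (Cens : Censor L) (m : ℕ) : Censor L :=
  fun PK q => Function.update (Cens PK q) m (evalKB L PK.KB (q m))

theorem Censor.correctAt_self (Cens : Censor L) (PK : PrivacyConfig L) (q : ℕ → L.Fml) (m : ℕ) :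
    Cens.correctAt m PK q m = evalKB L PK.KB (q m) :=
  Function.update_self ..

theorem Censor.correctAt_of_ne (Cens : Censor L) (PK : PrivacyConfig L) (q : ℕ → L.Fml)
    {i m : ℕ} (him : i ≠ m) : Cens.correctAt m PK q i = Cens PK q i :=
  Function.update_of_ne him ..

theorem Truthful.correctAt (htruth : Truthful Cens) (m : ℕ) : Truthful (Cens.correctAt m) := by
  intro PK q i
  obtain rfl | him := eq_or_ne i m
  · exact Or.inl (Cens.correctAt_self PK q i)
  · rw [Cens.correctAt_of_ne PK q him]
    exact htruth PK q i

theorem cont_correctAt_subset {PK : PrivacyConfig L} {q : ℕ → L.Fml} {k m : ℕ} (hq : q k = q m)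
    (hk : Cens PK q k = evalKB L PK.KB (q k)) (n : ℕ) :
    cont (Cens.correctAt m) PK q n ⊆ cont Cens PK q (max n (k + 1)) := by
  rintro F (⟨i, hi, rfl⟩ | hF)
  · left
    obtain rfl | him := eq_or_ne i m
    · exact ⟨k, by omega, by rw [Cens.correctAt_self, hk, hq]⟩
    · exact ⟨i, by omega, by rw [Cens.correctAt_of_ne PK q him]⟩
  · exact Or.inr hF

theorem MinimallyInvasive.eq_evalKB_of_not_entails_correctAt (hmin : MinimallyInvasive Cens)
    (htruth : Truthful Cens) {PK : PrivacyConfig L} {q : ℕ → L.Fml} {m : ℕ}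
    (hsafe : ∀ n, ∀ s ∈ PK.Sec, ¬ Entails (cont (Cens.correctAt m) PK q n) (MFml.box s)) :
    Cens PK q m = evalKB L PK.KB (q m) := by
  by_contra hdistort
  obtain ⟨n, ⟨s, hs, hent⟩ | hunsat⟩ := hmin PK q m hdistort (Cens.correctAt m)
    (fun _ hlt => Cens.correctAt_of_ne PK q hlt.ne) (Cens.correctAt_self PK q m)
  · exact hsafe n s hs hent
  · exact hunsat ((htruth.correctAt m).credible PK q n)

theorem MinimallyInvasive.eq_evalKB_of_query_eq (hmin : MinimallyInvasive Cens)
    (htruth : Truthful Cens) (heff : Effective Cens) {PK : PrivacyConfig L} {q : ℕ → L.Fml}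
    {k m : ℕ} (hq : q k = q m) (hk : Cens PK q k = evalKB L PK.KB (q k)) :
    Cens PK q m = evalKB L PK.KB (q m) :=
  hmin.eq_evalKB_of_not_entails_correctAt htruth fun n s hs hent =>
    heff PK q (max n (k + 1)) s hs (hent.mono (cont_correctAt_subset hq hk n))

end Censors

/-- A truthful, effective and minimally invasive censor answers
the same query always in the same way. -/
theorem same_query_same_answer {L : Logic} (Cens : Censor L)
    (htruth : Truthful Cens) (heff : Effective Cens)
    (hmin : MinimallyInvasive Cens)
    (PK : PrivacyConfig L) (q : ℕ → L.Fml) (i j : ℕ) (hq : q i = q j) :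
    Cens PK q i = Cens PK q j := by
  rcases htruth PK q i with hi | hi
  · rw [hmin.eq_evalKB_of_query_eq htruth heff hq hi, hi, hq]
  · rcases htruth PK q j with hj | hj
    · rw [hmin.eq_evalKB_of_query_eq htruth heff hq.symm hj, hj, hq]
    · rw [hi, hj]
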